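/- Block descent for CBCG with adaptive stepsize: for every k ≥ 0 and every i ∈ {1,…,N}, H(x^{k,i−1}) − H(x^{k,i}) ≥ (α_i^k/2) S_i(x^{k,i−1}) ≥ ((α_i^k)² β_i / 2) ‖A_i(p_i^k − x_i^k)‖². -/

import Mathlib

open scoped RealInnerProductSpace BigOperators
noncomputable section

/-- The `i`-th block space `ℝ^{n_i}` (with the Euclidean norm). -/
abbrev Blk {N : ℕ} (nb : Fin N → ℕ) (i : Fin N) : Type := EuclideanSpace ℝ (Fin (nb i))

/-- The full space `ℝ^n`, `n = n_1 + ⋯ + n_N`, seen as the `ℓ²`-product of the blocks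
(this is isometric to `ℝ^n` with the Euclidean norm, respecting the block structure). -/
abbrev FullSpc {N : ℕ} (nb : Fin N → ℕ) : Type := PiLp 2 fun i => Blk nb i

/-- The inclusion of the `i`-th block into the full space, i.e. the linear map
`U_i` represented by the submatrix of the identity matrix corresponding to block `i`
(so that `x_i = U_iᵀ x` is simply `x i`). -/
def blkIncl {N : ℕ} (nb : Fin N → ℕ) (i : Fin N) : Blk nb i →L[ℝ] FullSpc nb :=
  LinearMap.toContinuousLinearMap
    (((WithLp.linearEquiv 2 ℝ (∀ i, Blk nb i)).symm.toLinearMap).comp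
      (LinearMap.single ℝ (fun i => Blk nb i) i))

/-- `∇ f (x) = Aᵀ ∇F(Ax)` for `f = F ∘ A`. -/
def gradFull {N m : ℕ} (nb : Fin N → ℕ) (A : FullSpc nb →L[ℝ] EuclideanSpace ℝ (Fin m))
    (gradF : EuclideanSpace ℝ (Fin m) → EuclideanSpace ℝ (Fin m)) (x : FullSpc nb) :
    FullSpc nb :=
  (ContinuousLinearMap.adjoint A) (gradF (A x))

/-- `∇_i f (x) = U_iᵀ ∇ f(x) = A_iᵀ ∇F(Ax)` where `A_i = A U_i`. -/
def gradBlk {N m : ℕ} (nb : Fin N → ℕ) (A : FullSpc nb →L[ℝ] EuclideanSpace ℝ (Fin m))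
    (gradF : EuclideanSpace ℝ (Fin m) → EuclideanSpace ℝ (Fin m)) (i : Fin N) (x : FullSpc nb) :
    Blk nb i :=
  (ContinuousLinearMap.adjoint (A.comp (blkIncl nb i))) (gradF (A x))

/-!
The whole argument takes place in one block. Along the segment from `x_i` to the oracle point `p_i`
the block Lipschitz bound gives the quadratic upper model
`F(A x) + a ⟨∇_i f(x), p_i - x_i⟩ + a² β_i ‖A_i (p_i - x_i)‖² / 2` for the smooth part, and
convexity bounds `g_i` by its chord; together they say that a step of length `a` decreases `H` by
at least `a S_i - a² β_i ‖A_i (p_i - x_i)‖² / 2`. The adaptive stepsize satisfies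
`a β_i ‖A_i (p_i - x_i)‖² ≤ S_i`, so at most half of the linear decrease is lost.
-/

section Descent

theorem le_quadratic_of_hasDerivAt_le {φ φ' : ℝ → ℝ} {a s C : ℝ} (ha : 0 ≤ a)
    (hφ : ∀ t ∈ Set.Icc 0 a, HasDerivAt φ (φ' t) t)
    (hφ' : ∀ t ∈ Set.Icc 0 a, φ' t ≤ s + C * t) :
    φ a ≤ φ 0 + s * a + C / 2 * a ^ 2 := by
  have hmodel (t : ℝ) :
      HasDerivAt (fun t ↦ φ 0 + s * t + C / 2 * t ^ 2) (s + C * t) t := by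
    refine ((((hasDerivAt_id' t).const_mul s).const_add (φ 0)).add
      (((hasDerivAt_id' t).pow 2).const_mul (C / 2))).congr_deriv ?_
    ring
  exact image_le_of_deriv_right_le_deriv_boundary
    (fun t ht ↦ (hφ t ht).continuousAt.continuousWithinAt)
    (fun t ht ↦ (hφ t (Set.Ico_subset_Icc_self ht)).hasDerivWithinAt) (by simp)
    (fun t _ ↦ (hmodel t).continuousAt.continuousWithinAt)
    (fun t _ ↦ (hmodel t).hasDerivWithinAt)
    (fun t ht ↦ hφ' t (Set.Ico_subset_Icc_self ht)) (Set.right_mem_Icc.2 ha)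

theorem apply_add_smul_le_of_hasGradientAt {G : Type*} [NormedAddCommGroup G]
    [InnerProductSpace ℝ G] [CompleteSpace G] {F : G → ℝ} {F' : G → G} {u d : G} {a L : ℝ}
    (ha : 0 ≤ a)
    (hF : ∀ t ∈ Set.Icc 0 a, HasGradientAt F (F' (u + t • d)) (u + t • d))
    (hF' : ∀ t ∈ Set.Icc 0 a, ‖F' (u + t • d) - F' u‖ ≤ L * ‖t • d‖) :
    F (u + a • d) ≤ F u + ⟪F' u, d⟫ * a + L * ‖d‖ ^ 2 / 2 * a ^ 2 := by
  have hderiv : ∀ t ∈ Set.Icc 0 a,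
      HasDerivAt (fun t : ℝ ↦ F (u + t • d)) ⟪F' (u + t • d), d⟫ t := by
    intro t ht
    have hline : HasDerivAt (fun t : ℝ ↦ u + t • d) d t := by
      simpa only [id_eq, one_smul] using ((hasDerivAt_id t).smul_const d).const_add u
    exact (hF t ht).hasFDerivAt.comp_hasDerivAt t hline
  have hslope : ∀ t ∈ Set.Icc 0 a, ⟪F' (u + t • d), d⟫ ≤ ⟪F' u, d⟫ + L * ‖d‖ ^ 2 * t := by
    intro t ht
    have hgrowth : ⟪F' (u + t • d) - F' u, d⟫ ≤ L * ‖d‖ ^ 2 * t := calc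
      ⟪F' (u + t • d) - F' u, d⟫ ≤ ‖F' (u + t • d) - F' u‖ * ‖d‖ := real_inner_le_norm _ _
      _ ≤ L * ‖t • d‖ * ‖d‖ := by gcongr; exact hF' t ht
      _ = L * ‖d‖ ^ 2 * t := by rw [norm_smul, Real.norm_of_nonneg ht.1]; ring
    rw [inner_sub_left] at hgrowth
    linarith
  simpa only [zero_smul, add_zero] using le_quadratic_of_hasDerivAt_le ha hderiv hslope

theorem apply_add_smul_sub_le_of_convexOn {𝕜 E : Type*} [Field 𝕜] [LinearOrder 𝕜]
    [IsStrictOrderedRing 𝕜] [AddCommGroup E] [Module 𝕜 E] {X : Set E} {g : E → 𝕜}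
    (hg : ConvexOn 𝕜 X g) {x p : E} (hx : x ∈ X) (hp : p ∈ X) {a : 𝕜} (ha : a ∈ Set.Icc 0 1) :
    g (x + a • (p - x)) ≤ g x + a * (g p - g x) := calc
  g (x + a • (p - x)) = g ((1 - a) • x + a • p) := by congr 1; module
  _ ≤ (1 - a) • g x + a • g p := hg.2 hx hp (sub_nonneg.2 ha.2) ha.1 (sub_add_cancel 1 a)
  _ = g x + a * (g p - g x) := by simp only [smul_eq_mul]; ring

end Descent

section ConditionalGradient

variable {E G : Type*} [NormedAddCommGroup E] [InnerProductSpace ℝ E]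
  [NormedAddCommGroup G] [InnerProductSpace ℝ G]

/-- `p` is an output of the generalized linear minimization oracle over `X`: it minimizes
`⟪c, ·⟫ + g` on `X`. -/
def IsLinearOraclePoint (X : Set E) (g : E → ℝ) (c p : E) : Prop :=
  p ∈ X ∧ ∀ q ∈ X, ⟪c, p⟫ + g p ≤ ⟪c, q⟫ + g q

/-- The conditional gradient gap at `x` for the gradient `c`, computed with the point `p`. The
paper's `S_i(x)` is its value at any oracle point `p`. -/
def condGradGap (g : E → ℝ) (c x p : E) : ℝ :=
  ⟪c, x - p⟫ + g x - g p

variable {X : Set E} {g : E → ℝ} {c x p q : E}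

theorem condGradGap_le_condGradGap (hp : IsLinearOraclePoint X g c p) (hq : q ∈ X) :
    condGradGap g c x q ≤ condGradGap g c x p := by
  have := hp.2 q hq
  simp only [condGradGap, inner_sub_right]
  linarith

theorem condGradGap_eq_condGradGap (hp : IsLinearOraclePoint X g c p)
    (hq : IsLinearOraclePoint X g c q) : condGradGap g c x p = condGradGap g c x q :=
  (condGradGap_le_condGradGap hq hp.1).antisymm (condGradGap_le_condGradGap hp hq.1)

theorem condGradGap_nonneg (hp : IsLinearOraclePoint X g c p) (hx : x ∈ X) :
    0 ≤ condGradGap g c x p := by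
  simpa only [condGradGap, sub_self, inner_zero_right, zero_add] using
    condGradGap_le_condGradGap (x := x) hp hx

variable [CompleteSpace E] [CompleteSpace G] {F : G → ℝ} {F' : G → G} {B : E →L[ℝ] G} {u : G}
  {a L : ℝ}

theorem condGradStep_sub_sq_le_sub (hg : ConvexOn ℝ X g) (hx : x ∈ X) (hp : p ∈ X)
    (ha : a ∈ Set.Icc (0 : ℝ) 1)
    (hF : ∀ t ∈ Set.Icc 0 a, HasGradientAt F (F' (u + t • B (p - x))) (u + t • B (p - x)))
    (hF' : ∀ t ∈ Set.Icc 0 a,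
      ‖F' (u + t • B (p - x)) - F' u‖ ≤ L * ‖t • B (p - x)‖) :
    a * condGradGap g (B.adjoint (F' u)) x p - a ^ 2 * L / 2 * ‖B (p - x)‖ ^ 2 ≤
      F u + g x - (F (u + a • B (p - x)) + g (x + a • (p - x))) := by
  have hsmooth := apply_add_smul_le_of_hasGradientAt ha.1 hF hF'
  have hchord := apply_add_smul_sub_le_of_convexOn hg hx hp ha
  have hslope : ⟪B.adjoint (F' u), x - p⟫ = -⟪F' u, B (p - x)⟫ := by
    rw [ContinuousLinearMap.adjoint_inner_left, ← neg_sub p x, map_neg, inner_neg_right]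
  rw [condGradGap, hslope]
  linarith

end ConditionalGradient

section CyclicUpdate

variable {N : ℕ} {E : Fin N → Type*} {z : ℕ → ∀ i, E i} {v : ∀ i, E i}

theorem cyclicUpdate_apply_of_le
    (hz : ∀ i : Fin N, z (i + 1) = Function.update (z i) i (v i)) (i : Fin N) {l : ℕ}
    (hl : l ≤ i) : z l i = z 0 i := by
  induction l with
  | zero => rfl
  | succ l ih =>
    have hne : i ≠ ⟨l, by omega⟩ := fun h ↦ by simp [h] at hl
    rw [hz ⟨l, by omega⟩, Function.update_of_ne hne, ih (by omega)]

theorem cyclicUpdate_mem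
    (hz : ∀ i : Fin N, z (i + 1) = Function.update (z i) i (v i)) {X : ∀ i, Set (E i)}
    (h0 : ∀ j, z 0 j ∈ X j) (hv : ∀ i : Fin N, (∀ j, z i j ∈ X j) → v i ∈ X i) {l : ℕ}
    (hl : l ≤ N) : ∀ j, z l j ∈ X j := by
  induction l with
  | zero => exact h0
  | succ l ih =>
    have hmem := ih (by omega)
    rw [hz ⟨l, hl⟩]
    exact (Function.forall_update_iff _ fun j w ↦ w ∈ X j).2
      ⟨hv ⟨l, hl⟩ hmem, fun j _ ↦ hmem j⟩

end CyclicUpdate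

theorem sum_apply_update {ι R : Type*} [Fintype ι] [DecidableEq ι] [AddCommGroup R]
    {E : ι → Type*} (g : ∀ i, E i → R) (z : ∀ i, E i) (i : ι) (w : E i) :
    ∑ j, g j (Function.update z i w j) = ∑ j, g j (z j) + (g i w - g i (z i)) := by
  rw [← sub_eq_iff_eq_add', ← Finset.sum_sub_distrib, Fintype.sum_eq_single i]
  · rw [Function.update_self]
  · intro j hj
    rw [Function.update_of_ne hj, sub_self]

theorem add_pi_single {ι : Type*} [DecidableEq ι] {E : ι → Type*} [∀ i, AddZeroClass (E i)]
    (z : ∀ i, E i) (i : ι) (h : E i) :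
    z + Pi.single i h = Function.update z i (z i + h) := by
  ext j
  obtain rfl | hj := eq_or_ne j i
  · rw [Function.update_self, Pi.add_apply, Pi.single_eq_same]
  · rw [Function.update_of_ne hj, Pi.add_apply, Pi.single_eq_of_ne hj, add_zero]

theorem ofLp_add_piLp_single {ι : Type*} [DecidableEq ι] {E : ι → Type*}
    [∀ i, AddCommGroup (E i)] {r : ENNReal} (z : PiLp r E) (i : ι) (h : E i) :
    (z + PiLp.single r i h).ofLp = Function.update z.ofLp i (z i + h) :=
  add_pi_single z.ofLp i h

theorem smul_piLp_single {𝕜 ι : Type*} [Semiring 𝕜] [DecidableEq ι] {E : ι → Type*}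
    [∀ i, AddCommGroup (E i)] [∀ i, Module 𝕜 (E i)] {r : ENNReal} (c : 𝕜) (i : ι) (h : E i) :
    c • PiLp.single r i h = PiLp.single r i (c • h) :=
  congrArg (WithLp.toLp r) (Pi.single_smul i c h).symm

theorem min_div_one_mem_Icc {𝕜 : Type*} [Field 𝕜] [LinearOrder 𝕜] [IsStrictOrderedRing 𝕜]
    {b c : 𝕜} (hb : 0 ≤ b) (hc : 0 ≤ c) : min (b / c) 1 ∈ Set.Icc 0 1 :=
  ⟨le_min (div_nonneg hb hc) zero_le_one, min_le_right _ _⟩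

section Blocks

variable {ι : Type*} [DecidableEq ι] {E : ι → Type*} [∀ i, NormedAddCommGroup (E i)]
  [∀ i, InnerProductSpace ℝ (E i)] {G : Type*} [NormedAddCommGroup G] [InnerProductSpace ℝ G]

/-- The operator `A_i = A U_i`, where `U_i` is `PiLp.single 2 i`. -/
def blockMap (A : PiLp 2 E →L[ℝ] G) (i : ι) : E i →L[ℝ] G :=
  A.comp ((PiLp.continuousLinearEquiv 2 ℝ E).symm.toContinuousLinearMap.comp
    (ContinuousLinearMap.single ℝ E i))

theorem map_add_piLp_single (A : PiLp 2 E →L[ℝ] G) (z : PiLp 2 E) (i : ι) (h : E i) :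
    A (z + PiLp.single 2 i h) = A z + blockMap A i h :=
  map_add A z _

/-- The partial gradient `∇_i f(z) = A_iᵀ ∇F(A z)` of `f = F ∘ A`, where `F'` stands for `∇F`. -/
def blockGradient [∀ i, CompleteSpace (E i)] [CompleteSpace G] (A : PiLp 2 E →L[ℝ] G)
    (F' : G → G) (i : ι) (z : PiLp 2 E) : E i :=
  (blockMap A i).adjoint (F' (A z))

/-- The composite objective `H(z) = F(A z) + ∑ j, g_j(z_j)`. -/
def compositeObjective [Fintype ι] (A : PiLp 2 E →L[ℝ] G) (F : G → ℝ) (g : ∀ i, E i → ℝ)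
    (z : PiLp 2 E) : ℝ :=
  F (A z) + ∑ j, g j (z j)

variable [Fintype ι] [∀ i, CompleteSpace (E i)] [CompleteSpace G] {A : PiLp 2 E →L[ℝ] G}
  {X : ∀ i, Set (E i)} {F : G → ℝ} {F' : G → G} {g : ∀ i, E i → ℝ} {z : PiLp 2 E} {i : ι}
  {p q : E i} {a L : ℝ}

theorem blockStep_sub_sq_le_compositeObjective_sub (hg : ConvexOn ℝ (X i) (g i))
    (hF : ∀ x : PiLp 2 E, (∀ j, x j ∈ X j) → HasGradientAt F (F' (A x)) (A x))
    (hL : ∀ h : E i, (∀ j, (z + PiLp.single 2 i h) j ∈ X j) →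
      ‖F' (A (z + PiLp.single 2 i h)) - F' (A z)‖ ≤ L * ‖blockMap A i h‖)
    (hz : ∀ j, z j ∈ X j) (hp : p ∈ X i) (ha : a ∈ Set.Icc (0 : ℝ) 1) :
    a * condGradGap (g i) (blockGradient A F' i z) (z i) p -
        a ^ 2 * L / 2 * ‖blockMap A i (p - z i)‖ ^ 2 ≤
      compositeObjective A F g z -
        compositeObjective A F g (z + a • PiLp.single 2 i (p - z i)) := by
  have hsegment : ∀ t ∈ Set.Icc 0 a, ∀ j, (z + PiLp.single 2 i (t • (p - z i))) j ∈ X j := by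
    intro t ht
    rw [ofLp_add_piLp_single]
    exact (Function.forall_update_iff _ fun j w ↦ w ∈ X j).2
      ⟨hg.1.add_smul_sub_mem (hz i) hp ⟨ht.1, ht.2.trans ha.2⟩, fun j _ ↦ hz j⟩
  have hline (t : ℝ) : A z + t • blockMap A i (p - z i) =
      A (z + PiLp.single 2 i (t • (p - z i))) := by
    rw [map_add_piLp_single, map_smul]
  have hstep := condGradStep_sub_sq_le_sub hg (hz i) hp ha
    (fun t ht ↦ by rw [hline]; exact hF _ (hsegment t ht))
    (fun t ht ↦ by rw [hline, ← map_smul]; exact hL _ (hsegment t ht))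
  rw [hline] at hstep
  simp only [compositeObjective, smul_piLp_single]
  rw [ofLp_add_piLp_single, sum_apply_update, blockGradient]
  linarith

theorem adaptive_blockStep_descent (hg : ConvexOn ℝ (X i) (g i))
    (hF : ∀ x : PiLp 2 E, (∀ j, x j ∈ X j) → HasGradientAt F (F' (A x)) (A x))
    (hL0 : 0 ≤ L)
    (hL : ∀ h : E i, (∀ j, (z + PiLp.single 2 i h) j ∈ X j) →
      ‖F' (A (z + PiLp.single 2 i h)) - F' (A z)‖ ≤ L * ‖blockMap A i h‖)
    (hz : ∀ j, z j ∈ X j)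
    (hp : IsLinearOraclePoint (X i) (g i) (blockGradient A F' i z) p)
    (hq : IsLinearOraclePoint (X i) (g i) (blockGradient A F' i z) q)
    (ha : a = min (condGradGap (g i) (blockGradient A F' i z) (z i) q /
      (L * ‖blockMap A i (p - z i)‖ ^ 2)) 1) :
    a / 2 * condGradGap (g i) (blockGradient A F' i z) (z i) q ≤
        compositeObjective A F g z -
          compositeObjective A F g (z + a • PiLp.single 2 i (p - z i)) ∧
      a ^ 2 * L / 2 * ‖blockMap A i (p - z i)‖ ^ 2 ≤
        a / 2 * condGradGap (g i) (blockGradient A F' i z) (z i) q := by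
  have hgap := condGradGap_nonneg hq (hz i)
  have hmem : a ∈ Set.Icc (0 : ℝ) 1 := ha ▸ min_div_one_mem_Icc hgap (by positivity)
  -- If the denominator vanishes, then `a = 0` because `b / 0 = 0`, and the bound is still true.
  have hstepsize : a * (L * ‖blockMap A i (p - z i)‖ ^ 2) ≤
      condGradGap (g i) (blockGradient A F' i z) (z i) q :=
    mul_le_of_le_div₀ hgap (by positivity) (ha.trans_le (min_le_left _ _))
  have hhalf := mul_le_mul_of_nonneg_left hstepsize hmem.1
  have hdescent := blockStep_sub_sq_le_compositeObjective_sub hg hF hL hz hp.1 hmem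
  rw [condGradGap_eq_condGradGap hp hq] at hdescent
  constructor <;> linarith

end Blocks

theorem cbcg_adaptive_block_descent_general {N : ℕ} {E : Fin N → Type*}
    [∀ i, NormedAddCommGroup (E i)] [∀ i, InnerProductSpace ℝ (E i)] [∀ i, CompleteSpace (E i)]
    {G : Type*} [NormedAddCommGroup G] [InnerProductSpace ℝ G] [CompleteSpace G]
    (A : PiLp 2 E →L[ℝ] G) (X : ∀ i, Set (E i))
    (g : ∀ i, E i → ℝ) (hg : ∀ i, ConvexOn ℝ (X i) (g i)) (F : G → ℝ) (F' : G → G)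
    (hF : ∀ z : PiLp 2 E, (∀ i, z i ∈ X i) → HasGradientAt F (F' (A z)) (A z))
    (β : Fin N → ℝ) (hβpos : ∀ i, 0 < β i)
    (hβ : ∀ (i : Fin N) (z : PiLp 2 E), (∀ j, z j ∈ X j) →
      ∀ h : E i, (∀ j, (z + PiLp.single 2 i h) j ∈ X j) →
      ‖F' (A (z + PiLp.single 2 i h)) - F' (A z)‖ ≤ β i * ‖blockMap A i h‖)
    (oracle : ∀ i : Fin N, PiLp 2 E → E i)
    (oracle_spec : ∀ (i : Fin N) (z : PiLp 2 E), (∀ j, z j ∈ X j) →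
      IsLinearOraclePoint (X i) (g i) (blockGradient A F' i z) (oracle i z))
    (x : ℕ → PiLp 2 E) (y : ℕ → ℕ → PiLp 2 E) (p : ℕ → ∀ i, E i) (α : ℕ → Fin N → ℝ)
    (hx : ∀ i, x 0 i ∈ X i) (hy : ∀ k, y k 0 = x k) (hxy : ∀ k, x (k + 1) = y k N)
    (hp : ∀ (k : ℕ) (i : Fin N),
      IsLinearOraclePoint (X i) (g i) (blockGradient A F' i (y k i)) (p k i))
    (hupd : ∀ (k : ℕ) (i : Fin N),
      y k (i + 1) = y k i + α k i • PiLp.single 2 i (p k i - y k i i))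
    (hadapt : ∀ (k : ℕ) (i : Fin N), α k i =
      min (condGradGap (g i) (blockGradient A F' i (y k i)) (y k i i) (oracle i (y k i)) /
        (β i * ‖blockMap A i (p k i - x k i)‖ ^ 2)) 1)
    (k : ℕ) (i : Fin N) :
    α k i / 2 * condGradGap (g i) (blockGradient A F' i (y k i)) (y k i i) (oracle i (y k i)) ≤
        compositeObjective A F g (y k i) - compositeObjective A F g (y k (i + 1)) ∧
      α k i ^ 2 * β i / 2 * ‖blockMap A i (p k i - x k i)‖ ^ 2 ≤
        α k i / 2 *
          condGradGap (g i) (blockGradient A F' i (y k i)) (y k i i) (oracle i (y k i)) := by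
  have hcyclic (k : ℕ) (i : Fin N) : (y k (i + 1)).ofLp =
      Function.update (y k i).ofLp i (y k i i + α k i • (p k i - y k i i)) := by
    rw [hupd, smul_piLp_single, ofLp_add_piLp_single]
  have hupd_mem (k : ℕ) (i : Fin N) (hz : ∀ j, y k i j ∈ X j) :
      y k i i + α k i • (p k i - y k i i) ∈ X i := by
    have hgap := condGradGap_nonneg (oracle_spec i _ hz) (hz i)
    have hα : α k i ∈ Set.Icc (0 : ℝ) 1 :=
      hadapt k i ▸ min_div_one_mem_Icc hgap (mul_nonneg (hβpos i).le (sq_nonneg _))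
    exact (hg i).1.add_smul_sub_mem (hz i) (hp k i).1 hα
  have hsweep (k : ℕ) (hk : ∀ j, x k j ∈ X j) {l : ℕ} (hl : l ≤ N) : ∀ j, y k l j ∈ X j :=
    cyclicUpdate_mem (z := fun l ↦ (y k l).ofLp) (hcyclic k) (by rwa [hy]) (hupd_mem k) hl
  have hfeasible (k : ℕ) : ∀ j, x k j ∈ X j := by
    induction k with
    | zero => exact hx
    | succ k ih => rw [hxy]; exact hsweep k ih le_rfl
  have hz := hsweep k (hfeasible k) i.is_lt.le
  have hfresh : x k i = y k i i := by
    rw [← hy]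
    exact (cyclicUpdate_apply_of_le (z := fun l ↦ (y k l).ofLp) (hcyclic k) i le_rfl).symm
  have hstep := hadapt k i
  rw [hfresh] at hstep ⊢
  rw [hupd]
  exact adaptive_blockStep_descent (hg i) hF (hβpos i).le (hβ i _ hz) hz (hp k i)
    (oracle_spec i _ hz) hstep

/-- **Block descent for CBCG with adaptive stepsize**: for every `k ≥ 0` and every block `i`,
`H(x^{k,i−1}) − H(x^{k,i}) ≥ (α_i^k/2) S_i(x^{k,i−1}) ≥ ((α_i^k)² β_i / 2) ‖A_i(p_i^k − x_i^k)‖²`. -/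
theorem cbcg_adaptive_block_descent
    {N m : ℕ} (hN : 0 < N) (nb : Fin N → ℕ) (hnb : ∀ i, 0 < nb i)
    (A : FullSpc nb →L[ℝ] EuclideanSpace ℝ (Fin m))
    (Xi : ∀ i, Set (Blk nb i))
    (hXcpt : ∀ i, IsCompact (Xi i)) (hXconv : ∀ i, Convex ℝ (Xi i))
    (hXne : ∀ i, (Xi i).Nonempty)
    (D : Fin N → ℝ) (hD : ∀ i, Metric.diam (Xi i) = D i)
    (g : ∀ i, Blk nb i → ℝ) (hgconv : ∀ i, ConvexOn ℝ (Xi i) (g i))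
    (F : EuclideanSpace ℝ (Fin m) → ℝ)
    (hFconv : ConvexOn ℝ Set.univ F)
    (gradF : EuclideanSpace ℝ (Fin m) → EuclideanSpace ℝ (Fin m))
    (hgradF : ∀ x : FullSpc nb, (∀ i, x i ∈ Xi i) → HasGradientAt F (gradF (A x)) (A x))
    (LF : ℝ)
    (hLF : ∀ x : FullSpc nb, (∀ i, x i ∈ Xi i) → ∀ y : FullSpc nb, (∀ i, y i ∈ Xi i) →
      ‖gradF (A x) - gradF (A y)‖ ≤ LF * ‖A x - A y‖)
    (β : Fin N → ℝ) (hβpos : ∀ i, 0 < β i)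
    (hβ : ∀ (i : Fin N) (z : FullSpc nb), (∀ j, z j ∈ Xi j) →
      ∀ h : Blk nb i, (∀ j, (z + blkIncl nb i h) j ∈ Xi j) →
      ‖gradF (A (z + blkIncl nb i h)) - gradF (A z)‖ ≤ β i * ‖A.comp (blkIncl nb i) h‖)
    -- blockwise linear-oracle selections `p_i(x) ∈ argmin_{p_i ∈ X_i} {⟨∇_i f(x), p_i⟩ + g_i(p_i)}`
    (piSel : ∀ i : Fin N, FullSpc nb → Blk nb i)
    (hpiSel : ∀ (i : Fin N) (z : FullSpc nb), (∀ j, z j ∈ Xi j) →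
      piSel i z ∈ Xi i ∧ ∀ q ∈ Xi i,
        ⟪gradBlk nb A gradF i z, piSel i z⟫ + g i (piSel i z) ≤
          ⟪gradBlk nb A gradF i z, q⟫ + g i q)
    -- the CBCG iterates: `x k` is `x^k` and `y k i` is `x^{k,i}` for `0 ≤ i ≤ N`
    (x : ℕ → FullSpc nb) (y : ℕ → ℕ → FullSpc nb)
    (pk : ℕ → (i : Fin N) → Blk nb i) (α : ℕ → Fin N → ℝ)
    (hx0 : ∀ i, x 0 i ∈ Xi i)
    (hy0 : ∀ k, y k 0 = x k)
    (hyN : ∀ k, x (k + 1) = y k N)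
    (hα01 : ∀ k i, α k i ∈ Set.Icc (0 : ℝ) 1)
    (hpk : ∀ (k : ℕ) (i : Fin N), pk k i ∈ Xi i ∧ ∀ q ∈ Xi i,
      ⟪gradBlk nb A gradF i (y k i.val), pk k i⟫ + g i (pk k i) ≤
        ⟪gradBlk nb A gradF i (y k i.val), q⟫ + g i q)
    (hupd : ∀ (k : ℕ) (i : Fin N),
      y k (i.val + 1) = y k i.val + α k i • blkIncl nb i (pk k i - y k i.val i))
    -- the adaptive stepsize `α_i^k = min{ S_i(x^{k,i−1}) / (β_i ‖A_i(p_i^k − x_i^k)‖²), 1 }`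
    (hαada : ∀ (k : ℕ) (i : Fin N), α k i =
      min ((⟪gradBlk nb A gradF i (y k i.val), y k i.val i - piSel i (y k i.val)⟫ +
          g i (y k i.val i) - g i (piSel i (y k i.val))) /
        (β i * ‖A.comp (blkIncl nb i) (pk k i - x k i)‖ ^ 2)) 1)
    :
    ∀ (k : ℕ) (i : Fin N),
      (α k i / 2) * (⟪gradBlk nb A gradF i (y k i.val), y k i.val i - piSel i (y k i.val)⟫ +
          g i (y k i.val i) - g i (piSel i (y k i.val))) ≤
        (F (A (y k i.val)) + ∑ j, g j (y k i.val j)) -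
          (F (A (y k (i.val + 1))) + ∑ j, g j (y k (i.val + 1) j)) ∧
      (α k i) ^ 2 * β i / 2 * ‖A.comp (blkIncl nb i) (pk k i - x k i)‖ ^ 2 ≤
        (α k i / 2) * (⟪gradBlk nb A gradF i (y k i.val), y k i.val i - piSel i (y k i.val)⟫ +
          g i (y k i.val i) - g i (piSel i (y k i.val))) :=
  -- `blkIncl nb i` and `gradBlk nb A gradF i` unfold to `PiLp.single 2 i` and
  -- `blockGradient A gradF i`, so the two statements agree definitionally.
  cbcg_adaptive_block_descent_general A Xi g hgconv F gradF hgradF β hβpos hβ piSel hpiSel x y pk α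
    hx0 hy0 hyN hpk hupd hαada
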